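/- Let (R,𝔪) be an F-finite Noetherian local ring of prime characteristic p > 0, let x ∈ 𝔪 be a non-zerodivisor on R, and let t ≥ 0 be a real number. If the pair (R, x^t) is sharply F-pure, then there exists an integer N ≥ 1 such that the pair (R, (x+δ)^t) is sharply F-pure for every δ ∈ 𝔪^N. -/

import Mathlib

open IsLocalRing

/-- A `p^{-e}`-linear map on `R`: an additive map `φ : R → R` with
`φ (r^{p^e} * s) = r * φ s` for all `r, s`. -/
def IsPeLinearMap (p e : ℕ) {R : Type*} [CommRing R] (φ : R → R) : Prop :=
  (∀ a b : R, φ (a + b) = φ a + φ b) ∧ ∀ r s : R, φ (r ^ p ^ e * s) = r * φ s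

/-- `R` is F-finite: the Frobenius endomorphism `r ↦ r ^ p` is a finite ring map. -/
def IsFFinite (p : ℕ) (R : Type*) [CommRing R] : Prop :=
  ∃ f : R →+* R, (∀ r, f r = r ^ p) ∧ f.Finite

/-- The pair `(R, x^t)` is sharply F-pure: for infinitely many `e ≥ 1` there is a
`p^{-e}`-linear map `φ : R → R` with `φ (x^{⌈t(p^e - 1)⌉} * r^{p^e}) = r` for all `r`. -/
def SharplyFPurePair (p : ℕ) {R : Type*} [CommRing R] (x : R) (t : ℝ) : Prop :=
  ∀ E : ℕ, ∃ e : ℕ, E ≤ e ∧ 1 ≤ e ∧ ∃ φ : R → R, IsPeLinearMap p e φ ∧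
    ∀ r : R, φ (x ^ ⌈t * ((p : ℝ) ^ e - 1)⌉₊ * r ^ p ^ e) = r

/-!
Write `q = p ^ e`. A `p^{-e}`-linear map `φ` sends the Frobenius power `I^{[q]}` into `I`, so moving
`x` by an element of `I^{[q]}` moves `φ (x ^ n)` by an element of `I`: if `φ (x ^ n) = 1` and `I`
lies in the Jacobson radical, the new value is still a unit and `φ` can be rescaled. Composing `φ`
with itself shows that one such `e` already gives sharp F-purity, so perturbing `x` within a single
`I^{[q]}` is harmless, and this ideal contains a power of `I` if `I` is finitely generated.
-/

namespace IsPeLinearMap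

variable {p e e' : ℕ} {R : Type*} [CommRing R] {φ ψ : R → R}

lemma map_sub (hφ : IsPeLinearMap p e φ) (a b : R) : φ (a - b) = φ a - φ b := by
  rw [eq_sub_iff_add_eq, ← hφ.1, sub_add_cancel]

lemma map_zero (hφ : IsPeLinearMap p e φ) : φ 0 = 0 := by
  simpa only [sub_self] using hφ.map_sub 0 0

lemma map_mul_pow (hφ : IsPeLinearMap p e φ) (s r : R) : φ (s * r ^ p ^ e) = φ s * r := by
  rw [mul_comm, hφ.2, mul_comm]

lemma comp (hφ : IsPeLinearMap p e φ) (hψ : IsPeLinearMap p e' ψ) :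
    IsPeLinearMap p (e + e') (φ ∘ ψ) where
  left a b := by simp only [Function.comp_apply, hψ.1, hφ.1]
  right r s := by simp only [Function.comp_apply, pow_add, pow_mul, hψ.2, hφ.2]

lemma const_mul (hφ : IsPeLinearMap p e φ) (c : R) : IsPeLinearMap p e fun s ↦ c * φ s where
  left a b := by simp only [hφ.1, mul_add]
  right r s := by simp only [hφ.2, mul_left_comm]

lemma comp_mul_left (hφ : IsPeLinearMap p e φ) (c : R) : IsPeLinearMap p e fun s ↦ φ (c * s) where
  left a b := by simp only [mul_add, hφ.1]
  right r s := by simp only [mul_left_comm c, hφ.2]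

end IsPeLinearMap

section FrobeniusPower

variable {R : Type*} [CommSemiring R] {I : Ideal R}

/-- The Frobenius power `I^{[q]}`, the ideal generated by the `q`-th powers of the elements of `I`;
`q` is not required to be a power of the characteristic. -/
def frobeniusPower (I : Ideal R) (q : ℕ) : Ideal R :=
  Ideal.span ((· ^ q) '' (I : Set R))

lemma le_radical_frobeniusPower (I : Ideal R) (q : ℕ) : I ≤ (frobeniusPower I q).radical :=
  fun r hr ↦ ⟨q, Ideal.subset_span ⟨r, hr, rfl⟩⟩

lemma exists_pow_le_frobeniusPower (hI : I.FG) (q : ℕ) : ∃ N : ℕ, I ^ N ≤ frobeniusPower I q :=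
  Ideal.exists_pow_le_of_le_radical_of_fg (le_radical_frobeniusPower I q) hI

end FrobeniusPower

lemma IsPeLinearMap.map_mem_of_mem_frobeniusPower {p e : ℕ} {R : Type*} [CommRing R]
    {I : Ideal R} {φ : R → R} (hφ : IsPeLinearMap p e φ) {a : R}
    (ha : a ∈ frobeniusPower I (p ^ e)) : φ a ∈ I := by
  induction ha using Submodule.closure_induction with
  | zero => exact hφ.map_zero.symm ▸ I.zero_mem
  | add a b _ _ ha hb => exact (hφ.1 a b).symm ▸ I.add_mem ha hb
  | smul_mem c _ hs =>
    obtain ⟨r, hr, rfl⟩ := hs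
    rw [smul_eq_mul, hφ.map_mul_pow]
    exact I.mul_mem_left _ hr

lemma ceil_mul_mul_sub_one_le {K : Type*} [Ring K] [LinearOrder K] [IsStrictOrderedRing K]
    [FloorSemiring K] (t a : K) (b : ℕ) :
    ⌈t * (a * b - 1)⌉₊ ≤ ⌈t * (b - 1)⌉₊ + ⌈t * (a - 1)⌉₊ * b := by
  refine Nat.ceil_le.2 ?_
  push_cast
  calc t * (a * b - 1) = t * (b - 1) + t * (a - 1) * b := by noncomm_ring
    _ ≤ ⌈t * (b - 1)⌉₊ + ⌈t * (a - 1)⌉₊ * b := by gcongr <;> exact Nat.le_ceil _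

/-- The `R`-linear map `R → F^e_* R` with `1 ↦ F^e_* a` splits, i.e. some `p^{-e}`-linear map sends
`a` to `1`. Sharp F-purity of `(R, x^t)` asks for this with `a = x^{⌈t(p^e - 1)⌉}`. -/
def PeSplits (p e : ℕ) {R : Type*} [CommRing R] (a : R) : Prop :=
  ∃ φ : R → R, IsPeLinearMap p e φ ∧ φ a = 1

section PeSplits

variable {p e e' : ℕ} {R : Type*} [CommRing R] {a b x : R} {t : ℝ}

lemma peSplits_iff_exists_leftInverse :
    PeSplits p e a ↔ ∃ φ : R → R, IsPeLinearMap p e φ ∧ ∀ r : R, φ (a * r ^ p ^ e) = r := by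
  refine exists_congr fun φ ↦ and_congr_right fun hφ ↦ ⟨fun h r ↦ ?_, fun h ↦ ?_⟩
  · rw [hφ.map_mul_pow, h, one_mul]
  · simpa only [one_pow, mul_one] using h 1

lemma IsPeLinearMap.peSplits_of_isUnit {φ : R → R} (hφ : IsPeLinearMap p e φ)
    (h : IsUnit (φ a)) : PeSplits p e a :=
  let ⟨c, hc⟩ := h.exists_left_inv
  ⟨_, hφ.const_mul c, hc⟩

lemma PeSplits.of_dvd (hb : PeSplits p e b) (hab : a ∣ b) : PeSplits p e a := by
  obtain ⟨φ, hφ, hφb⟩ := hb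
  obtain ⟨c, rfl⟩ := hab
  exact ⟨_, hφ.comp_mul_left c, by rwa [mul_comm c a]⟩

lemma PeSplits.mul (ha : PeSplits p e a) (hb : PeSplits p e' b) :
    PeSplits p (e + e') (b * a ^ p ^ e') := by
  obtain ⟨φ, hφ, hφa⟩ := ha
  obtain ⟨ψ, hψ, hψb⟩ := hb
  exact ⟨_, hφ.comp hψ, by rw [Function.comp_apply, hψ.map_mul_pow, hψb, one_mul, hφa]⟩

lemma PeSplits.of_sub_mem_frobeniusPower {I : Ideal R} (hI : I ≤ Ring.jacobson R)
    (hb : PeSplits p e b) (hab : a - b ∈ frobeniusPower I (p ^ e)) : PeSplits p e a := by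
  obtain ⟨φ, hφ, hφb⟩ := hb
  have hsub : φ a - 1 ∈ I := by
    simpa only [hφ.map_sub, hφb] using hφ.map_mem_of_mem_frobeniusPower hab
  refine hφ.peSplits_of_isUnit (Ideal.isUnit_of_sub_one_mem_jacobson_bot _ ?_)
  exact Ideal.jacobson_bot (R := R) ▸ hI hsub

lemma PeSplits.pow_ceil_add (h : PeSplits p e (x ^ ⌈t * ((p : ℝ) ^ e - 1)⌉₊))
    (h' : PeSplits p e' (x ^ ⌈t * ((p : ℝ) ^ e' - 1)⌉₊)) :
    PeSplits p (e + e') (x ^ ⌈t * ((p : ℝ) ^ (e + e') - 1)⌉₊) := by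
  refine (h.mul h').of_dvd ?_
  rw [← pow_mul, ← pow_add]
  refine pow_dvd_pow x ?_
  simpa only [pow_add, Nat.cast_pow] using ceil_mul_mul_sub_one_le t ((p : ℝ) ^ e) (p ^ e')

lemma PeSplits.pow_ceil_mul_succ (h : PeSplits p e (x ^ ⌈t * ((p : ℝ) ^ e - 1)⌉₊)) (k : ℕ) :
    PeSplits p (e * (k + 1)) (x ^ ⌈t * ((p : ℝ) ^ (e * (k + 1)) - 1)⌉₊) := by
  induction k with
  | zero => simpa only [zero_add, mul_one] using h
  | succ k ih => exact ih.pow_ceil_add h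

lemma sharplyFPurePair_iff_exists_peSplits :
    SharplyFPurePair p x t ↔ ∃ e : ℕ, 1 ≤ e ∧ PeSplits p e (x ^ ⌈t * ((p : ℝ) ^ e - 1)⌉₊) := by
  simp only [SharplyFPurePair, ← peSplits_iff_exists_leftInverse]
  constructor
  · intro h
    obtain ⟨e, -, he⟩ := h 0
    exact ⟨e, he⟩
  · rintro ⟨e, he, h⟩ E
    have hE : E + 1 ≤ e * (E + 1) := Nat.le_mul_of_pos_left _ he
    exact ⟨e * (E + 1), by lia, by lia, h.pow_ceil_mul_succ E⟩

end PeSplits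

theorem sharplyFPure_is_stable_general {p : ℕ} {R : Type*} [CommRing R] {I : Ideal R} (hfg : I.FG)
    (hI : I ≤ Ring.jacobson R) {x : R} {t : NNReal} (hsharp : SharplyFPurePair p x t) :
    ∃ N : ℕ, 1 ≤ N ∧ ∀ δ ∈ I ^ N, SharplyFPurePair p (x + δ) t := by
  obtain ⟨e, he, hsplit⟩ := sharplyFPurePair_iff_exists_peSplits.1 hsharp
  obtain ⟨N, hN⟩ := exists_pow_le_frobeniusPower hfg (p ^ e)
  refine ⟨N + 1, Nat.le_add_left 1 N, fun δ hδ ↦ ?_⟩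
  have hδ' : x + δ - x ∈ frobeniusPower I (p ^ e) := by
    simpa only [add_sub_cancel_left] using hN (Ideal.pow_le_pow_right N.le_succ hδ)
  exact sharplyFPurePair_iff_exists_peSplits.2 ⟨e, he, hsplit.of_sub_mem_frobeniusPower hI <|
    Ideal.mem_of_dvd _ (sub_dvd_pow_sub_pow _ _ _) hδ'⟩

/-- Let `(R,𝔪)` be an F-finite Noetherian local ring of prime
characteristic `p > 0`, `x ∈ 𝔪` a non-zerodivisor, and `t ≥ 0` a real number.  If the pair
`(R, x^t)` is sharply F-pure, then there is an `N ≥ 1` such that `(R, (x+δ)^t)` is sharply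
F-pure for every `δ ∈ 𝔪 ^ N`. -/
theorem sharplyFPure_is_stable
    (p : ℕ) (hp : p.Prime)
    (R : Type*) [CommRing R] [IsNoetherianRing R] [IsLocalRing R] [CharP R p]
    (hff : IsFFinite p R)
    (x : R) (hx : x ∈ maximalIdeal R) (hreg : x ∈ nonZeroDivisors R)
    (t : ℝ) (ht : 0 ≤ t)
    (hsharp : SharplyFPurePair p x t) :
    ∃ N : ℕ, 1 ≤ N ∧ ∀ δ ∈ maximalIdeal R ^ N, SharplyFPurePair p (x + δ) t :=
  sharplyFPure_is_stable_general (t := ⟨t, ht⟩) (IsNoetherian.noetherian (maximalIdeal R))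
    (ringJacobson_eq_maximalIdeal R).ge hsharp
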